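/- arXiv:0912.0478 — 8 statements merged into one kernel-verified Lean document; each statement's English description precedes it below -/
import Mathlib

section
/- Let A be a nonempty set, let c ∈ A, and let f : A^n → A be an operation with f(c, c, …, c) = c. If f is self-commuting, then for every i ∈ [n] the operation f_c^i : A^{n−1} → A defined by f_c^i(a_1, …, a_{n−1}) = f(a_1, …, a_{i−1}, c, a_i, …, a_{n−1}) is self-commuting. -/
/-- `f` commutes with `g`. -/
def Commutes {A : Type*} {n m : ℕ} (f : (Fin n → A) → A) (g : (Fin m → A) → A) : Prop :=
  ∀ M : Fin n → Fin m → A,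
    f (fun i => g (fun j => M i j)) = g (fun j => f (fun i => M i j))

/-- `f` is self-commuting. -/
def SelfCommuting {A : Type*} {n : ℕ} (f : (Fin n → A) → A) : Prop :=
  Commutes f f

/-!
If `f` commutes with `g` and `c` is fixed by `g`, then `f` with one argument replaced by `c` still
commutes with `g`: apply the commutation identity to the matrix extended by a row of entries `c`.
Commutation is symmetric, and `c` is fixed by `f_c^i` as well as by `f`, so for `g = f` the
replacement can be made on one side and then on the other.
-/

section InsertNth

variable {n : ℕ}

theorem comp_insertNth {α β : Type*} (φ : α → β) (i : Fin (n + 1)) (x : α) (p : Fin n → α) :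
    φ ∘ i.insertNth (α := fun _ => α) x p = i.insertNth (φ x) (φ ∘ p) := by
  funext k
  cases k using i.succAboveCases <;> simp

theorem insertNth_const {α : Type*} (i : Fin (n + 1)) (x : α) :
    i.insertNth (α := fun _ => α) x (fun _ => x) = fun _ => x :=
  Fin.insertNth_self_removeNth i fun _ => x

end InsertNth

namespace Commutes

variable {A : Type*} {n m : ℕ}

theorem symm {f : (Fin n → A) → A} {g : (Fin m → A) → A} (h : Commutes f g) : Commutes g f :=
  fun M => (h fun i j => M j i).symm

theorem insertNth_left {f : (Fin (n + 1) → A) → A} {g : (Fin m → A) → A} {c : A}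
    (h : Commutes f g) (hc : g (fun _ => c) = c) (i : Fin (n + 1)) :
    Commutes (fun a : Fin n → A => f (i.insertNth c a)) g := by
  intro M
  let N : Fin (n + 1) → Fin m → A := i.insertNth (fun _ => c) M
  have apply_rows : (fun k => g (N k)) = i.insertNth c fun k => g (M k) :=
    (comp_insertNth g i (fun _ => c) M).trans (by rw [hc]; rfl)
  have column (j : Fin m) : (fun k => N k j) = i.insertNth c fun k => M k j :=
    comp_insertNth (Function.eval j) i (fun _ => c) M
  calc f (i.insertNth c fun k => g (M k))
      = f fun k => g (N k) := by rw [apply_rows]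
    _ = g fun j => f fun k => N k j := h N
    _ = g fun j => f (i.insertNth c fun k => M k j) := by simp only [column]

end Commutes

theorem selfCommuting_substitute_constant {A : Type*} [Nonempty A] {n : ℕ}
    (f : (Fin (n + 1) → A) → A) (c : A)
    (hc : f (fun _ => c) = c) (hf : SelfCommuting f) (i : Fin (n + 1)) :
    SelfCommuting (fun a : Fin n → A => f (i.insertNth c a)) := by
  have hcomm : Commutes (fun a : Fin n → A => f (i.insertNth c a)) f :=
    Commutes.insertNth_left hf hc i
  have hfix : f (i.insertNth c fun _ => c) = c := by rw [insertNth_const, hc]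
  exact hcomm.symm.insertNth_left hfix i
end

section
/- Let L be a bounded distributive lattice. A function f : L^n → L is a lattice polynomial function if and only if there exist elements a_I ∈ L, one for each subset I ⊆ [n], such that for every x ∈ L^n, f(x) = ⋁_{I ⊆ [n]} (a_I ∧ ⋀_{i ∈ I} x_i). -/
/-- Lattice polynomial functions: the smallest class of functions `L^n → L`
containing the projections and the constant functions and closed under
pointwise joins and meets. -/
inductive IsLatticePolynomial {L : Type*} [Lattice L] {n : ℕ} : ((Fin n → L) → L) → Prop
  | proj (i : Fin n) : IsLatticePolynomial (fun x => x i)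
  | const (c : L) : IsLatticePolynomial (fun _ => c)
  | sup {f g : (Fin n → L) → L} : IsLatticePolynomial f → IsLatticePolynomial g →
      IsLatticePolynomial (fun x => f x ⊔ g x)
  | inf {f g : (Fin n → L) → L} : IsLatticePolynomial f → IsLatticePolynomial g →
      IsLatticePolynomial (fun x => f x ⊓ g x)

/-!
The functions in disjunctive normal form contain the projections and the constants, and joins of
them are computed coefficientwise. The meet of the monomials `a_I ∧ ⋀_{i ∈ I} x_i` and
`b_J ∧ ⋀_{j ∈ J} x_j` is the monomial on `I ∪ J` with coefficient `a_I ∧ b_J`, so distributivity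
turns the meet of two normal forms into a finite join of monomials, which is again a normal form.
-/

namespace IsLatticePolynomial

variable {L κ : Type*} [Lattice L] {n : ℕ} {s : Finset κ} {g : κ → (Fin n → L) → L}

theorem finset_sup [OrderBot L] (hg : ∀ k ∈ s, IsLatticePolynomial (g k)) :
    IsLatticePolynomial (s.sup g) :=
  Finset.sup_induction (const ⊥) (fun _ h₁ _ h₂ ↦ h₁.sup h₂) hg

theorem finset_inf [OrderTop L] (hg : ∀ k ∈ s, IsLatticePolynomial (g k)) :
    IsLatticePolynomial (s.inf g) :=
  Finset.inf_induction (const ⊤) (fun _ h₁ _ h₂ ↦ h₁.inf h₂) hg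

end IsLatticePolynomial

/-- The disjunctive normal form `⋁_I (a_I ∧ ⋀_{i ∈ I} x_i)` with coefficients `a`, evaluated
at `x`. The variables are indexed by an arbitrary finite type. -/
def dnf {L ι : Type*} [Lattice L] [BoundedOrder L] [Fintype ι] (a : Finset ι → L) (x : ι → L) : L :=
  Finset.univ.sup fun I ↦ a I ⊓ I.inf x

theorem isLatticePolynomial_dnf {L : Type*} [Lattice L] [BoundedOrder L] {n : ℕ}
    (a : Finset (Fin n) → L) : IsLatticePolynomial (dnf a) := by
  have monomial (I : Finset (Fin n)) : IsLatticePolynomial fun x ↦ a I ⊓ I.inf x := by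
    have inf_proj := IsLatticePolynomial.finset_inf (s := I) fun i _ ↦ .proj (L := L) i
    simpa only [Finset.inf_apply] using (IsLatticePolynomial.const (a I)).inf inf_proj
  have sup_monomial := IsLatticePolynomial.finset_sup (s := .univ) fun I _ ↦ monomial I
  convert sup_monomial using 1
  ext x
  simp only [dnf, Finset.sup_apply]

section Monomial

variable {L ι : Type*} [Lattice L] [BoundedOrder L] [Fintype ι] [DecidableEq ι]

theorem dnf_update_bot (I : Finset ι) (c : L) (x : ι → L) :
    dnf (Function.update ⊥ I c) x = c ⊓ I.inf x := by
  refine le_antisymm (Finset.sup_le fun J _ ↦ ?_) ?_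
  · obtain rfl | hJ := eq_or_ne J I
    · rw [Function.update_self]
    · simp only [Function.update_of_ne hJ, Pi.bot_apply, bot_inf_eq, bot_le]
  · simpa only [dnf, Function.update_self] using
      Finset.le_sup (f := fun J ↦ Function.update ⊥ I c J ⊓ J.inf x) (Finset.mem_univ I)

theorem dnf_update_bot_singleton_top (i : ι) (x : ι → L) :
    dnf (Function.update ⊥ {i} ⊤) x = x i := by
  rw [dnf_update_bot, top_inf_eq, Finset.inf_singleton]

theorem dnf_update_bot_empty (c : L) (x : ι → L) : dnf (Function.update ⊥ ∅ c) x = c := by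
  rw [dnf_update_bot, Finset.inf_empty, inf_top_eq]

end Monomial

section Distrib

variable {L ι : Type*} [DistribLattice L] [BoundedOrder L] [Fintype ι]

theorem dnf_sup (a b : Finset ι → L) (x : ι → L) : dnf (a ⊔ b) x = dnf a x ⊔ dnf b x := by
  simp only [dnf, Pi.sup_apply, inf_sup_right]
  exact Finset.sup_sup

theorem dnf_finset_sup {κ : Type*} (s : Finset κ) (a : κ → Finset ι → L) (x : ι → L) :
    dnf (s.sup a) x = s.sup fun k ↦ dnf (a k) x := by
  simp only [dnf, Finset.sup_apply, Finset.sup_inf_distrib_right]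
  exact Finset.sup_comm _ _ _

theorem dnf_inf_dnf [DecidableEq ι] (a b : Finset ι → L) (x : ι → L) :
    dnf a x ⊓ dnf b x =
      dnf (Finset.univ.sup fun p : Finset ι × Finset ι ↦
        Function.update ⊥ (p.1 ∪ p.2) (a p.1 ⊓ b p.2)) x :=
  calc dnf a x ⊓ dnf b x
    _ = Finset.univ.sup fun p : Finset ι × Finset ι ↦
          (a p.1 ⊓ p.1.inf x) ⊓ (b p.2 ⊓ p.2.inf x) := by
      simp only [dnf, Finset.sup_inf_sup, Finset.univ_product_univ]
    _ = Finset.univ.sup fun p : Finset ι × Finset ι ↦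
          (a p.1 ⊓ b p.2) ⊓ (p.1 ∪ p.2).inf x := by
      simp only [Finset.inf_union, inf_inf_inf_comm]
    _ = _ := by simp only [dnf_finset_sup, dnf_update_bot]

end Distrib

theorem IsLatticePolynomial.exists_eq_dnf {L : Type*} [DistribLattice L] [BoundedOrder L] {n : ℕ}
    {f : (Fin n → L) → L} (hf : IsLatticePolynomial f) : ∃ a, f = dnf a := by
  induction hf with
  | proj i => exact ⟨_, funext fun x ↦ (dnf_update_bot_singleton_top i x).symm⟩
  | const c => exact ⟨_, funext fun x ↦ (dnf_update_bot_empty c x).symm⟩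
  | sup _ _ ihf ihg =>
    obtain ⟨a, rfl⟩ := ihf
    obtain ⟨b, rfl⟩ := ihg
    exact ⟨a ⊔ b, funext fun x ↦ (dnf_sup a b x).symm⟩
  | inf _ _ ihf ihg =>
    obtain ⟨a, rfl⟩ := ihf
    obtain ⟨b, rfl⟩ := ihg
    exact ⟨_, funext (dnf_inf_dnf a b)⟩

/-- Goodstein's theorem: over a bounded distributive lattice, the lattice
polynomial functions are exactly the functions representable in
disjunctive normal form. -/
theorem isLatticePolynomial_iff_DNF {L : Type*} [DistribLattice L] [BoundedOrder L]
    {n : ℕ} (f : (Fin n → L) → L) :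
    IsLatticePolynomial f ↔
      ∃ a : Finset (Fin n) → L,
        ∀ x : Fin n → L,
          f x = (Finset.univ : Finset (Finset (Fin n))).sup
            (fun I => a I ⊓ I.inf (fun i => x i)) := by
  constructor
  · intro hf
    obtain ⟨a, rfl⟩ := hf.exists_eq_dnf
    exact ⟨a, fun _ ↦ rfl⟩
  · rintro ⟨a, ha⟩
    obtain rfl : f = dnf a := funext ha
    exact isLatticePolynomial_dnf a
end

section
/- Let L be a bounded distributive lattice. Every lattice polynomial function f : L^n → L is completely determined by its restriction to {0,1}^n; that is, if f and g are lattice polynomial functions from L^n to L that agree on all tuples whose entries belong to {0, 1}, then f = g. -/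
/-!
Congruence modulo a prime ideal splits a distributive lattice into at most two classes, so modulo
the ideal every point of a box `[a, b]` is congruent to a vertex of the box. Two functions that
preserve congruences and agree at the vertices therefore agree on the box modulo every prime ideal,
and prime ideals separate the points of a distributive lattice.
-/

open Order Set

theorem inf_mem_iff_of_isPrime {P : Type*} [SemilatticeInf P] {J : Ideal P} (hJ : J.IsPrime)
    {a b : P} : a ⊓ b ∈ J ↔ a ∈ J ∨ b ∈ J :=
  ⟨hJ.mem_or_mem, fun h => h.elim (J.lower inf_le_left) (J.lower inf_le_right)⟩

section Lattice

variable {L ι : Type*} [Lattice L]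

/-- A function `L^ι → L` preserves congruences (is *compatible*) if it sends coordinatewise
congruent tuples to congruent elements, for every lattice congruence of `L`. This is what allows
its values to be computed modulo a prime ideal; `ι` may be infinite. -/
def PreservesLatticeCon (f : (ι → L) → L) : Prop :=
  ∀ (c : LatticeCon L) ⦃x y : ι → L⦄, (∀ i, c.r (x i) (y i)) → c.r (f x) (f y)

theorem IsLatticePolynomial.preservesLatticeCon {n : ℕ} {f : (Fin n → L) → L}
    (hf : IsLatticePolynomial f) : PreservesLatticeCon f := by
  intro c x y hxy
  induction hf with
  | proj i => exact hxy i
  | const a => exact c.refl a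
  | sup _ _ ihf ihg => exact c.sup ihf ihg
  | inf _ _ ihf ihg => exact c.inf ihf ihg

/-- Congruence modulo a prime ideal `J`: the lattice congruence whose classes are `J` and its
complement. -/
def primeIdealCon (J : Ideal L) (hJ : J.IsPrime) : LatticeCon L where
  r a b := a ∈ J ↔ b ∈ J
  iseqv := ⟨fun _ => Iff.rfl, Iff.symm, Iff.trans⟩
  inf hab hcd := by simp only [inf_mem_iff_of_isPrime hJ, hab, hcd]
  sup hab hcd := by simp only [Ideal.sup_mem_iff, hab, hcd]

theorem exists_endpoint_primeIdealCon {J : Ideal L} (hJ : J.IsPrime) {a b x : L}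
    (hx : x ∈ Icc a b) : ∃ v ∈ ({a, b} : Set L), (primeIdealCon J hJ).r x v := by
  by_cases hxJ : x ∈ J
  · exact ⟨a, mem_insert a {b}, iff_of_true hxJ (J.lower hx.1 hxJ)⟩
  · exact ⟨b, mem_insert_of_mem a rfl, iff_of_false hxJ fun hbJ => hxJ (J.lower hx.2 hbJ)⟩

theorem exists_vertex_primeIdealCon {J : Ideal L} (hJ : J.IsPrime) {a b x : ι → L}
    (hx : x ∈ Icc a b) :
    ∃ v ∈ univ.pi fun i => ({a i, b i} : Set L), ∀ i, (primeIdealCon J hJ).r (x i) (v i) := by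
  choose v hv hxv using fun i => exists_endpoint_primeIdealCon hJ ⟨hx.1 i, hx.2 i⟩
  exact ⟨v, fun i _ => hv i, hxv⟩

end Lattice

section DistribLattice

variable {L ι : Type*} [DistribLattice L]

theorem le_of_forall_isPrime_mem_imp_mem {a b : L}
    (h : ∀ J : Ideal L, J.IsPrime → b ∈ J → a ∈ J) : a ≤ b := by
  by_contra hab
  have hdisj : Disjoint (PFilter.principal a : Set L) (Ideal.principal b : Set L) :=
    disjoint_left.2 fun _ hac hcb => hab (le_trans hac hcb)
  obtain ⟨J, hJ, hbJ, haJ⟩ := DistribLattice.prime_ideal_of_disjoint_filter_ideal hdisj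
  exact disjoint_left.1 haJ (PFilter.mem_principal.2 le_rfl)
    (h J hJ (Ideal.principal_le_iff.1 hbJ))

theorem eq_of_forall_primeIdealCon {a b : L}
    (h : ∀ (J : Ideal L) (hJ : J.IsPrime), (primeIdealCon J hJ).r a b) : a = b :=
  le_antisymm (le_of_forall_isPrime_mem_imp_mem fun J hJ => (h J hJ).2)
    (le_of_forall_isPrime_mem_imp_mem fun J hJ => (h J hJ).1)

theorem latticePolynomial_determined_by_boolean_tuples_general {f g : (ι → L) → L}
    (hf : PreservesLatticeCon f) (hg : PreservesLatticeCon g) {a b : ι → L}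
    (h : EqOn f g (univ.pi fun i => {a i, b i})) : EqOn f g (Icc a b) := by
  intro x hx
  refine eq_of_forall_primeIdealCon fun J hJ => ?_
  obtain ⟨v, hv, hxv⟩ := exists_vertex_primeIdealCon hJ hx
  have hfg : (primeIdealCon J hJ).r (f x) (g v) := h hv ▸ hf _ hxv
  exact hfg.trans (hg _ hxv).symm

end DistribLattice

/-- Every lattice polynomial function over a bounded distributive lattice is
completely determined by its restriction to `{0,1}^n`. -/
theorem latticePolynomial_determined_by_boolean_tuples {L : Type*} [DistribLattice L]
    [BoundedOrder L] {n : ℕ} (f g : (Fin n → L) → L)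
    (hf : IsLatticePolynomial f) (hg : IsLatticePolynomial g)
    (h : ∀ x : Fin n → L, (∀ i, x i = ⊥ ∨ x i = ⊤) → f x = g x) :
    f = g := by
  have hIcc := latticePolynomial_determined_by_boolean_tuples_general hf.preservesLatticeCon
    hg.preservesLatticeCon (a := ⊥) (b := ⊤) fun x hx => h x fun i => hx i trivial
  exact funext fun _ => hIcc ⟨bot_le, le_top⟩
end

section
/- Let L be a bounded distributive lattice. A function g : {0,1}^n → L can be extended to a lattice polynomial function f : L^n → L (i.e., there is a lattice polynomial function f whose restriction to {0,1}^n equals g) if and only if g is nondecreasing with respect to the componentwise order on {0,1}^n. Moreover, when such an extension exists, it is unique. -/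
/-!
A lattice polynomial function equals its disjunctive normal form
`f x = ⋁ b, f (1_b) ⊓ ⋀ {x i | b i}`, where `1_b` is the vertex of the cube `{⊥, ⊤}^n` given by `b`.
For meets, a cross term `f (1_b) ⊓ g (1_c) ⊓ ⋀ {x i | b i ∨ c i}` is absorbed by the term of
`b ⊔ c`, since `f` and `g` are monotone. Hence `f` is determined by its values at the vertices.
Conversely, the disjunctive form with arbitrary coefficients `g b` is a lattice polynomial function;
at the vertex `1_c` it takes the value `⋁ b ≤ c, g b`, which is `g c` when `g` is monotone.
-/

section CubeVertex

variable {ι L : Type*}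

/-- The vertex of the cube `{⊥, ⊤}^ι ⊆ L^ι` encoded by `b : ι → Bool`. -/
def cubeVertex [Top L] [Bot L] (b : ι → Bool) : ι → L := fun i => if b i then ⊤ else ⊥

theorem cubeVertex_monotone [Preorder L] [BoundedOrder L] :
    Monotone (cubeVertex : (ι → Bool) → ι → L) := by
  intro b c hbc i
  by_cases hb : b i
  · simp [cubeVertex, hbc i hb]
  · simp [cubeVertex, hb]

end CubeVertex

section Conjunction

variable {ι L : Type*} [Fintype ι]

/-- The conjunction of the variables selected by `b`, the meet part of a term of a disjunctive
normal form; it is `⊤` when no variable is selected. -/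
def conjunction [SemilatticeInf L] [OrderTop L] (b : ι → Bool) (x : ι → L) : L :=
  (Finset.univ.filter fun i => b i).inf x

section SemilatticeInf

variable [SemilatticeInf L] [OrderTop L]

theorem le_conjunction_iff {b : ι → Bool} {x : ι → L} {a : L} :
    a ≤ conjunction b x ↔ ∀ i, b i → a ≤ x i := by
  simp [conjunction]

theorem conjunction_le {b : ι → Bool} {i : ι} (hi : b i) (x : ι → L) : conjunction b x ≤ x i :=
  le_conjunction_iff.1 le_rfl i hi

theorem conjunction_bot (x : ι → L) : conjunction ⊥ x = ⊤ := by
  simp [conjunction]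

theorem conjunction_single [DecidableEq ι] (i : ι) (x : ι → L) :
    conjunction (fun j => decide (j = i)) x = x i := by
  simp [conjunction, Finset.filter_eq']

theorem conjunction_sup (b c : ι → Bool) (x : ι → L) :
    conjunction (b ⊔ c) x = conjunction b x ⊓ conjunction c x := by
  refine eq_of_forall_le_iff fun a => ?_
  simp [le_conjunction_iff, or_imp, forall_and]

end SemilatticeInf

section BoundedOrder

variable [SemilatticeInf L] [BoundedOrder L]

theorem conjunction_cubeVertex_self (b : ι → Bool) : conjunction b (cubeVertex b : ι → L) = ⊤ :=
  top_le_iff.1 <| le_conjunction_iff.2 fun i hi => by simp [cubeVertex, hi]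

theorem conjunction_cubeVertex_of_not_le {b c : ι → Bool} (hbc : ¬ b ≤ c) :
    conjunction b (cubeVertex c : ι → L) = ⊥ := by
  obtain ⟨i, hbi, hci⟩ : ∃ i, b i = true ∧ c i = false := by
    simpa [Pi.le_def, Bool.le_iff_imp] using hbc
  exact le_bot_iff.1 <| (conjunction_le hbi _).trans_eq (by simp [cubeVertex, hci])

end BoundedOrder

end Conjunction

section DisjunctiveForm

variable {ι L : Type*} [Fintype ι] [DecidableEq ι]

/-- The disjunctive normal form with coefficients `g`: the join over all `b : ι → Bool` of the
terms `g b ⊓ ⋀ {x i | b i}`. -/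
def disjunctiveForm [Lattice L] [BoundedOrder L] (g : (ι → Bool) → L) (x : ι → L) : L :=
  Finset.univ.sup fun b => g b ⊓ conjunction b x

section Lattice

variable [Lattice L] [BoundedOrder L]

theorem le_disjunctiveForm (g : (ι → Bool) → L) (b : ι → Bool) (x : ι → L) :
    g b ⊓ conjunction b x ≤ disjunctiveForm g x :=
  Finset.le_sup (f := fun b => g b ⊓ conjunction b x) (Finset.mem_univ b)

theorem disjunctiveForm_le_iff {g : (ι → Bool) → L} {x : ι → L} {a : L} :
    disjunctiveForm g x ≤ a ↔ ∀ b, g b ⊓ conjunction b x ≤ a := by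
  simp [disjunctiveForm]

theorem disjunctiveForm_mono : Monotone (disjunctiveForm : ((ι → Bool) → L) → (ι → L) → L) :=
  fun _ _ hgh _ => Finset.sup_mono_fun fun b _ => inf_le_inf_right _ (hgh b)

theorem disjunctiveForm_cubeVertex {g : (ι → Bool) → L} (hg : Monotone g) (c : ι → Bool) :
    disjunctiveForm g (cubeVertex c) = g c := by
  refine le_antisymm (disjunctiveForm_le_iff.2 fun b => ?_) ?_
  · by_cases hbc : b ≤ c
    · exact inf_le_left.trans (hg hbc)
    · simp [conjunction_cubeVertex_of_not_le hbc]
  · simpa [conjunction_cubeVertex_self] using le_disjunctiveForm g c (cubeVertex c)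

theorem disjunctiveForm_proj (i : ι) (x : ι → L) :
    disjunctiveForm (fun b => cubeVertex b i) x = x i := by
  refine le_antisymm (disjunctiveForm_le_iff.2 fun b => ?_) ?_
  · by_cases hb : b i
    · exact inf_le_right.trans (conjunction_le hb x)
    · simp [cubeVertex, hb]
  · simpa [cubeVertex, conjunction_single] using
      le_disjunctiveForm (fun b => cubeVertex b i) (fun j => decide (j = i)) x

theorem disjunctiveForm_const (a : L) (x : ι → L) : disjunctiveForm (fun _ => a) x = a := by
  refine le_antisymm (disjunctiveForm_le_iff.2 fun _ => inf_le_left) ?_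
  simpa [conjunction_bot] using le_disjunctiveForm (fun _ => a) ⊥ x

end Lattice

section DistribLattice

variable [DistribLattice L] [BoundedOrder L]

theorem disjunctiveForm_sup (g h : (ι → Bool) → L) (x : ι → L) :
    disjunctiveForm (g ⊔ h) x = disjunctiveForm g x ⊔ disjunctiveForm h x := by
  simp only [disjunctiveForm, Pi.sup_apply, inf_sup_right, ← Finset.sup_sup, Pi.sup_def]

theorem disjunctiveForm_inf {g h : (ι → Bool) → L} (hg : Monotone g) (hh : Monotone h)
    (x : ι → L) :
    disjunctiveForm (g ⊓ h) x = disjunctiveForm g x ⊓ disjunctiveForm h x := by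
  refine le_antisymm
    (le_inf (disjunctiveForm_mono inf_le_left x) (disjunctiveForm_mono inf_le_right x)) ?_
  rw [disjunctiveForm, disjunctiveForm, Finset.sup_inf_sup, Finset.sup_le_iff]
  rintro ⟨b, c⟩ -
  calc g b ⊓ conjunction b x ⊓ (h c ⊓ conjunction c x)
      = g b ⊓ h c ⊓ conjunction (b ⊔ c) x := by rw [conjunction_sup, inf_inf_inf_comm]
    _ ≤ (g ⊓ h) (b ⊔ c) ⊓ conjunction (b ⊔ c) x :=
      inf_le_inf_right _ (inf_le_inf (hg le_sup_left) (hh le_sup_right))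
    _ ≤ disjunctiveForm (g ⊓ h) x := le_disjunctiveForm _ _ x

end DistribLattice

end DisjunctiveForm

section LatticePolynomial

variable {L : Type*} {n : ℕ}

theorem IsLatticePolynomial.monotone [Lattice L] {f : (Fin n → L) → L}
    (hf : IsLatticePolynomial f) : Monotone f := by
  induction hf with
  | proj i => exact Function.monotone_eval i
  | const c => exact monotone_const
  | sup _ _ hf hg => exact hf.sup hg
  | inf _ _ hf hg => exact hf.inf hg

theorem IsLatticePolynomial.finset_sup_s5 [Lattice L] [OrderBot L] {κ : Type*} {s : Finset κ}
    {F : κ → (Fin n → L) → L} (hF : ∀ k ∈ s, IsLatticePolynomial (F k)) :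
    IsLatticePolynomial (s.sup F) :=
  Finset.sup_induction (.const ⊥) (fun _ hf _ hg => hf.sup hg) hF

theorem IsLatticePolynomial.finset_inf_s5 [Lattice L] [OrderTop L] {κ : Type*} {s : Finset κ}
    {F : κ → (Fin n → L) → L} (hF : ∀ k ∈ s, IsLatticePolynomial (F k)) :
    IsLatticePolynomial (s.inf F) :=
  Finset.inf_induction (.const ⊤) (fun _ hf _ hg => hf.inf hg) hF

theorem isLatticePolynomial_conjunction [Lattice L] [OrderTop L] (b : Fin n → Bool) :
    IsLatticePolynomial (conjunction b : (Fin n → L) → L) := by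
  convert IsLatticePolynomial.finset_inf_s5 (s := Finset.univ.filter fun i => b i)
    fun i _ => .proj (L := L) i
  ext x
  rw [Finset.inf_apply, conjunction]

theorem isLatticePolynomial_disjunctiveForm [Lattice L] [BoundedOrder L]
    (g : (Fin n → Bool) → L) : IsLatticePolynomial (disjunctiveForm g) := by
  convert IsLatticePolynomial.finset_sup_s5 (s := Finset.univ)
    fun b _ => (IsLatticePolynomial.const (g b)).inf (isLatticePolynomial_conjunction b)
  ext x
  rw [Finset.sup_apply, disjunctiveForm]

theorem IsLatticePolynomial.eq_disjunctiveForm [DistribLattice L] [BoundedOrder L]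
    {f : (Fin n → L) → L} (hf : IsLatticePolynomial f) :
    f = disjunctiveForm (f ∘ cubeVertex) := by
  ext x
  induction hf with
  | proj i => exact (disjunctiveForm_proj i x).symm
  | const c => exact (disjunctiveForm_const c x).symm
  | @sup f g _ _ ihf ihg =>
    calc f x ⊔ g x
        = disjunctiveForm (f ∘ cubeVertex) x ⊔ disjunctiveForm (g ∘ cubeVertex) x :=
          congrArg₂ (· ⊔ ·) ihf ihg
      _ = disjunctiveForm (f ∘ cubeVertex ⊔ g ∘ cubeVertex) x :=
          (disjunctiveForm_sup _ _ x).symm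
  | @inf f g hf hg ihf ihg =>
    calc f x ⊓ g x
        = disjunctiveForm (f ∘ cubeVertex) x ⊓ disjunctiveForm (g ∘ cubeVertex) x :=
          congrArg₂ (· ⊓ ·) ihf ihg
      _ = disjunctiveForm (f ∘ cubeVertex ⊓ g ∘ cubeVertex) x :=
          (disjunctiveForm_inf (hf.monotone.comp cubeVertex_monotone)
            (hg.monotone.comp cubeVertex_monotone) x).symm

end LatticePolynomial

/-- A function `g : {0,1}^n → L` extends to a lattice polynomial function
`f : L^n → L` if and only if `g` is nondecreasing; moreover the extension
is unique whenever it exists. Here `{0,1}^n` is modelled as `Fin n → Bool`,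
with `b : Fin n → Bool` corresponding to the tuple whose `i`-th entry is
`⊤` if `b i = true` and `⊥` otherwise. -/
theorem extension_to_latticePolynomial_iff_monotone {L : Type*} [DistribLattice L]
    [BoundedOrder L] {n : ℕ} (g : (Fin n → Bool) → L) :
    ((∃ f : (Fin n → L) → L, IsLatticePolynomial f ∧
        ∀ b : Fin n → Bool, f (fun i => if b i then ⊤ else ⊥) = g b) ↔ Monotone g)
    ∧
    (∀ f₁ f₂ : (Fin n → L) → L, IsLatticePolynomial f₁ → IsLatticePolynomial f₂ →
        (∀ b : Fin n → Bool, f₁ (fun i => if b i then ⊤ else ⊥) = g b) →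
        (∀ b : Fin n → Bool, f₂ (fun i => if b i then ⊤ else ⊥) = g b) →
        f₁ = f₂) := by
  refine ⟨⟨?_, fun hg => ?_⟩, fun f₁ f₂ hf₁ hf₂ h₁ h₂ => ?_⟩
  · rintro ⟨f, hf, hfg⟩
    obtain rfl : f ∘ cubeVertex = g := funext hfg
    exact hf.monotone.comp cubeVertex_monotone
  · exact ⟨disjunctiveForm g, isLatticePolynomial_disjunctiveForm g, disjunctiveForm_cubeVertex hg⟩
  · have hvertex : f₁ ∘ cubeVertex = f₂ ∘ cubeVertex := funext fun b => (h₁ b).trans (h₂ b).symm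
    rw [hf₁.eq_disjunctiveForm, hf₂.eq_disjunctiveForm, hvertex]
end

section
/- Let L be a bounded distributive lattice. A function f : L^n → L is a lattice polynomial function if and only if for every x ∈ L^n, f(x) = ⋁_{I ⊆ [n]} (f(e_I) ∧ ⋀_{i ∈ I} x_i), where e_I ∈ L^n is the characteristic vector of I. -/
/-!
Every lattice polynomial function is monotone. The monotone functions that equal their canonical
disjunctive normal form include the projections and the constants, and by distributivity they are
closed under joins. For meets, expand the meet of the normal forms of `f` and `g` into the meets of
a term indexed by `I` with a term indexed by `J`: monotonicity bounds the coefficients `f e_I` and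
`g e_J` by `f e_{I ∪ J}` and `g e_{I ∪ J}`, so each such meet lies below the term of `f ⊓ g` indexed
by `I ∪ J`. Conversely, a canonical normal form is a finite join of finite meets of projections and
constants.
-/

section CharVec

variable {ι L : Type*} [DecidableEq ι]

/-- The characteristic vector `e_I` of a finite set `I` of coordinates, as a point of `ι → L`. -/
def charVec [Top L] [Bot L] (I : Finset ι) : ι → L :=
  fun i => if i ∈ I then ⊤ else ⊥

theorem charVec_of_mem [Top L] [Bot L] {I : Finset ι} {i : ι} (hi : i ∈ I) :
    (charVec I i : L) = ⊤ :=
  if_pos hi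

theorem charVec_of_notMem [Top L] [Bot L] {I : Finset ι} {i : ι} (hi : i ∉ I) :
    (charVec I i : L) = ⊥ :=
  if_neg hi

theorem charVec_mono [Preorder L] [BoundedOrder L] :
    Monotone (charVec : Finset ι → ι → L) := by
  intro I J hIJ i
  by_cases hi : i ∈ I
  · exact le_top.trans_eq (charVec_of_mem (hIJ hi)).symm
  · exact (charVec_of_notMem hi).trans_le bot_le

end CharVec

section CanonicalDNF

variable {ι L : Type*} [Fintype ι] [DecidableEq ι]

/-- The canonical disjunctive normal form of `f`: the join over all `I` of the meet of the
coefficient `f e_I` with the variables in `I`, where the empty meet is `⊤`. It is defined for an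
arbitrary function `f`. -/
def canonicalDNF [Lattice L] [BoundedOrder L] (f : (ι → L) → L) : (ι → L) → L :=
  fun x => (Finset.univ : Finset (Finset ι)).sup fun I => f (charVec I) ⊓ I.inf x

section Lattice

variable [Lattice L] [BoundedOrder L]

theorem term_le_canonicalDNF (f : (ι → L) → L) (I : Finset ι) (x : ι → L) :
    f (charVec I) ⊓ I.inf x ≤ canonicalDNF f x :=
  Finset.le_sup (f := fun I => f (charVec I) ⊓ I.inf x) (Finset.mem_univ I)

theorem canonicalDNF_mono : Monotone (canonicalDNF : ((ι → L) → L) → (ι → L) → L) :=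
  fun _ _ hfg _ => Finset.sup_mono_fun fun I _ => inf_le_inf_right _ (hfg (charVec I))

theorem canonicalDNF_proj (i : ι) : canonicalDNF (fun x : ι → L => x i) = fun x => x i := by
  funext x
  apply le_antisymm
  · refine Finset.sup_le fun I _ => ?_
    by_cases hi : i ∈ I
    · exact inf_le_right.trans (Finset.inf_le hi)
    · exact inf_le_left.trans ((charVec_of_notMem hi).trans_le bot_le)
  · calc
      x i = charVec {i} i ⊓ ({i} : Finset ι).inf x := by
        rw [charVec_of_mem (Finset.mem_singleton_self i), Finset.inf_singleton, top_inf_eq]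
      _ ≤ canonicalDNF (fun x => x i) x := term_le_canonicalDNF (fun x => x i) {i} x

theorem canonicalDNF_const (c : L) : canonicalDNF (fun _ : ι → L => c) = fun _ => c := by
  funext x
  apply le_antisymm
  · exact Finset.sup_le fun _ _ => inf_le_left
  · calc
      c = c ⊓ (∅ : Finset ι).inf x := by rw [Finset.inf_empty, inf_top_eq]
      _ ≤ canonicalDNF (fun _ => c) x := term_le_canonicalDNF (fun _ => c) ∅ x

end Lattice

variable [DistribLattice L] [BoundedOrder L]

theorem canonicalDNF_sup (f g : (ι → L) → L) :
    canonicalDNF (f ⊔ g) = canonicalDNF f ⊔ canonicalDNF g := by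
  funext x
  simp only [canonicalDNF, Pi.sup_apply, inf_sup_right]
  exact Finset.sup_sup

theorem canonicalDNF_inf {f g : (ι → L) → L} (hf : Monotone f) (hg : Monotone g) :
    canonicalDNF (f ⊓ g) = canonicalDNF f ⊓ canonicalDNF g := by
  refine le_antisymm (canonicalDNF_mono.map_inf_le f g) fun x => ?_
  rw [Pi.inf_apply, canonicalDNF, canonicalDNF, Finset.sup_inf_sup]
  refine Finset.sup_le fun ⟨I, J⟩ _ => ?_
  have hfI : f (charVec I) ≤ f (charVec (I ∪ J)) := hf (charVec_mono Finset.subset_union_left)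
  have hgJ : g (charVec J) ≤ g (charVec (I ∪ J)) := hg (charVec_mono Finset.subset_union_right)
  calc
    f (charVec I) ⊓ I.inf x ⊓ (g (charVec J) ⊓ J.inf x)
      = f (charVec I) ⊓ g (charVec J) ⊓ (I ∪ J).inf x := by
        rw [inf_inf_inf_comm, Finset.inf_union]
    _ ≤ (f ⊓ g) (charVec (I ∪ J)) ⊓ (I ∪ J).inf x := inf_le_inf_right _ (inf_le_inf hfI hgJ)
    _ ≤ canonicalDNF (f ⊓ g) x := term_le_canonicalDNF _ (I ∪ J) x

end CanonicalDNF

namespace IsLatticePolynomial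

variable {L : Type*} {n : ℕ}

theorem monotone_s6 [Lattice L] {f : (Fin n → L) → L} (hf : IsLatticePolynomial f) :
    Monotone f := by
  induction hf with
  | proj i => exact Function.monotone_eval i
  | const c => exact monotone_const
  | sup _ _ ihf ihg => exact ihf.sup ihg
  | inf _ _ ihf ihg => exact ihf.inf ihg

theorem finset_sup_s6 [Lattice L] [OrderBot L] {κ : Type*} {s : Finset κ}
    {F : κ → (Fin n → L) → L} (hF : ∀ k ∈ s, IsLatticePolynomial (F k)) :
    IsLatticePolynomial (s.sup F) :=
  Finset.sup_induction (.const ⊥) (fun _ hf _ hg => hf.sup hg) hF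

theorem finset_inf_s6 [Lattice L] [OrderTop L] {κ : Type*} {s : Finset κ}
    {F : κ → (Fin n → L) → L} (hF : ∀ k ∈ s, IsLatticePolynomial (F k)) :
    IsLatticePolynomial (s.inf F) :=
  Finset.inf_induction (.const ⊤) (fun _ hf _ hg => hf.inf hg) hF

theorem canonicalDNF_eq_self [DistribLattice L] [BoundedOrder L] {f : (Fin n → L) → L}
    (hf : IsLatticePolynomial f) : canonicalDNF f = f := by
  induction hf with
  | proj i => exact canonicalDNF_proj i
  | const c => exact canonicalDNF_const c
  | @sup f g _ _ ihf ihg => exact (canonicalDNF_sup f g).trans (congrArg₂ (· ⊔ ·) ihf ihg)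
  | inf hf hg ihf ihg =>
    exact (canonicalDNF_inf hf.monotone_s6 hg.monotone_s6).trans (congrArg₂ (· ⊓ ·) ihf ihg)

end IsLatticePolynomial

theorem isLatticePolynomial_canonicalDNF {L : Type*} [Lattice L] [BoundedOrder L] {n : ℕ}
    (f : (Fin n → L) → L) : IsLatticePolynomial (canonicalDNF f) := by
  have eq_sup_terms : canonicalDNF f = Finset.univ.sup fun I : Finset (Fin n) =>
      (fun _ => f (charVec I)) ⊓ I.inf fun i x => x i := by
    funext x
    simp only [canonicalDNF, Finset.sup_apply, Pi.inf_apply, Finset.inf_apply]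
  rw [eq_sup_terms]
  exact .finset_sup fun I _ => (IsLatticePolynomial.const _).inf (.finset_inf fun i _ => .proj i)

/-- Goodstein's canonical DNF representation: `f : L^n → L` is a lattice
polynomial function if and only if
`f(x) = ⋁_{I ⊆ [n]} (f(e_I) ∧ ⋀_{i ∈ I} x_i)` for all `x`, where `e_I` is
the characteristic vector of `I`. -/
theorem isLatticePolynomial_iff_canonical_DNF {L : Type*} [DistribLattice L]
    [BoundedOrder L] {n : ℕ} (f : (Fin n → L) → L) :
    IsLatticePolynomial f ↔
      ∀ x : Fin n → L,
        f x = (Finset.univ : Finset (Finset (Fin n))).sup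
          (fun I => f (fun i => if i ∈ I then ⊤ else ⊥) ⊓ I.inf (fun i => x i)) := by
  constructor
  · intro hf x
    exact (congrFun hf.canonicalDNF_eq_self x).symm
  · intro h
    have eq_canonicalDNF : f = canonicalDNF f := funext h
    rw [eq_canonicalDNF]
    exact isLatticePolynomial_canonicalDNF f
end

section
/- Let L be a distributive lattice and let f : L^n → L be a weighted disjunction, i.e., f(x_1,…,x_n) = a_∅ ∨ ⋁_{i ∈ [n]} (a_i ∧ x_i) for some elements a_∅, a_i (i ∈ [n]) of L. Then f is self-commuting. -/
/-- `f` is a weighted disjunction: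
`f(x) = a_∅ ∨ ⋁_{i ∈ [n]} (a_i ∧ x_i)` for some coefficients. -/
def IsWeightedDisjunction {L : Type*} [Lattice L] {n : ℕ} (f : (Fin n → L) → L) : Prop :=
  ∃ (a₀ : L) (a : Fin n → L),
    ∀ x : Fin n → L,
      f x = Finset.univ.fold (fun u v : L => u ⊔ v) a₀ (fun i => a i ⊓ x i)

/-- `f` has chain form:
`f(x) = a_∅ ∨ ⋁_{i ∈ [n]} (a_i ∧ x_i) ∨ ⋁_{1 ≤ ℓ ≤ r} (a_{S_ℓ} ∧ ⋀_{i ∈ S_ℓ} x_i)`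
for a chain of subsets `S_1 ⊆ ⋯ ⊆ S_r ⊆ [n]` with `r ≥ 1` and `|S_1| ≥ 2`,
where the coefficients satisfy `a_I ≤ a_J` whenever `I ⊆ J` among the indexed
sets, and for every `i ∉ S_1` there is `j ∈ S_1` with `a_i ≤ a_j`. -/
def HasChainForm {L : Type*} [Lattice L] {n : ℕ} (f : (Fin n → L) → L) : Prop :=
  ∃ (r : ℕ) (hr : 0 < r) (S : Fin r → Finset (Fin n)) (a₀ : L) (a : Fin n → L)
    (b : Fin r → L) (hne : ∀ ℓ : Fin r, (S ℓ).Nonempty),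
    (∀ ℓ m : Fin r, ℓ ≤ m → S ℓ ⊆ S m) ∧
    2 ≤ (S ⟨0, hr⟩).card ∧
    (∀ i, a₀ ≤ a i) ∧
    (∀ ℓ, a₀ ≤ b ℓ) ∧
    (∀ i ℓ, i ∈ S ℓ → a i ≤ b ℓ) ∧
    (∀ ℓ m, S ℓ ⊆ S m → b ℓ ≤ b m) ∧
    (∀ i, i ∉ S ⟨0, hr⟩ → ∃ j ∈ S ⟨0, hr⟩, a i ≤ a j) ∧
    ∀ x : Fin n → L,
      f x = Finset.univ.fold (fun u v : L => u ⊔ v)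
        (Finset.univ.fold (fun u v : L => u ⊔ v) a₀ (fun i => a i ⊓ x i))
        (fun ℓ : Fin r => b ℓ ⊓ (S ℓ).inf' (hne ℓ) (fun i => x i))

/-!
Let `f` and `g` have coefficients `a₀, a` and `b₀, b`. By distributivity, `f` applied to the
`g`-images of the rows of a matrix `M` is `f(b₀, …, b₀) ∨ ⋁ᵢⱼ (aᵢ ∧ bⱼ ∧ Mᵢⱼ)`. The double join is
symmetric in `f` and `g`, so they commute as soon as `f(b₀, …, b₀) = g(a₀, …, a₀)`; for `f = g`
this equation is trivial.
-/

section WeightedDisjunction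

variable {L ι κ : Type*} [Fintype ι] [Fintype κ]

/-- The weighted disjunction `x ↦ a₀ ∨ ⋁ i, (a i ∧ x i)` with given coefficients. As `L` need not
have a bottom element, the join is a fold starting at `a₀`. -/
def weightedDisjunction [Lattice L] (a₀ : L) (a x : ι → L) : L :=
  Finset.univ.fold (· ⊔ ·) a₀ fun i => a i ⊓ x i

theorem weightedDisjunction_le_iff [Lattice L] {a₀ c : L} {a x : ι → L} :
    weightedDisjunction a₀ a x ≤ c ↔ a₀ ≤ c ∧ ∀ i, a i ⊓ x i ≤ c := by
  refine (Finset.fold_op_rel_iff_and (r := (· ≥ ·)) sup_le_iff).trans ?_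
  simp only [ge_iff_le, Finset.mem_univ, true_imp_iff]

variable [DistribLattice L]

theorem inf_weightedDisjunction (u a₀ : L) (a x : ι → L) :
    u ⊓ weightedDisjunction a₀ a x = weightedDisjunction (u ⊓ a₀) (fun i => u ⊓ a i) x := by
  simp only [weightedDisjunction, inf_assoc]
  exact (Finset.fold_hom (inf_sup_left u)).symm

theorem weightedDisjunction_comp_le_iff {a₀ b₀ c : L} {a : ι → L} {b : κ → L} {M : ι → κ → L} :
    weightedDisjunction a₀ a (fun i => weightedDisjunction b₀ b (M i)) ≤ c ↔
      weightedDisjunction a₀ a (fun _ => b₀) ≤ c ∧ ∀ i j, a i ⊓ b j ⊓ M i j ≤ c := by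
  simp only [weightedDisjunction_le_iff, inf_weightedDisjunction, forall_and, and_assoc]

theorem weightedDisjunction_comm {a₀ b₀ : L} {a : ι → L} {b : κ → L}
    (h : weightedDisjunction a₀ a (fun _ => b₀) = weightedDisjunction b₀ b (fun _ => a₀))
    (M : ι → κ → L) :
    weightedDisjunction a₀ a (fun i => weightedDisjunction b₀ b (fun j => M i j)) =
      weightedDisjunction b₀ b (fun j => weightedDisjunction a₀ a (fun i => M i j)) := by
  refine eq_of_forall_ge_iff fun c => ?_
  have double_join_comm : (∀ i j, a i ⊓ b j ⊓ M i j ≤ c) ↔ ∀ j i, b j ⊓ a i ⊓ M i j ≤ c := by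
    simp only [inf_comm (a _) (b _)]
    exact forall_comm
  rw [weightedDisjunction_comp_le_iff, weightedDisjunction_comp_le_iff, h, double_join_comm]

end WeightedDisjunction

/-- Over a distributive lattice, every weighted disjunction is self-commuting. -/
theorem selfCommuting_of_weightedDisjunction {L : Type*} [DistribLattice L] {n : ℕ}
    (f : (Fin n → L) → L) (hf : IsWeightedDisjunction f) :
    SelfCommuting f := by
  obtain ⟨a₀, a, hf⟩ := hf
  obtain rfl : f = weightedDisjunction a₀ a := funext hf
  exact weightedDisjunction_comm rfl
end

section
/- Let L be a distributive lattice and let f : L^n → L have chain form, i.e., f(x_1,…,x_n) = a_∅ ∨ ⋁_{i ∈ [n]} (a_i ∧ x_i) ∨ ⋁_{1 ≤ ℓ ≤ r} (a_{S_ℓ} ∧ ⋀_{i ∈ S_ℓ} x_i) for a chain of subsets S_1 ⊆ S_2 ⊆ ⋯ ⊆ S_r ⊆ [n] with r ≥ 1 and |S_1| ≥ 2, and elements a_∅, a_i (i ∈ [n]), a_{S_ℓ} (1 ≤ ℓ ≤ r) of L such that a_I ≤ a_J whenever I ⊆ J (among the indexed sets), and for all i ∉ S_1 there exists j ∈ S_1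 with a_i ≤ a_j. Then f is self-commuting. -/
/-- The homomorphism to truth values determined by a prime ideal `J`. It sends an element to the
truth value of *not* lying in `J`, so that it is monotone. -/
def primeIdealHom {L : Type*} [Lattice L] (J : Order.Ideal L) (hJ : J.IsPrime) :
    LatticeHom L Prop where
  toFun z := z ∉ J
  map_sup' u v := by
    rw [Order.Ideal.sup_mem_iff, not_and_or]
    rfl
  map_inf' u v := by
    have mem_inf_iff : u ⊓ v ∈ J ↔ u ∈ J ∨ v ∈ J :=
      ⟨hJ.mem_or_mem, Or.rec (J.lower inf_le_left) (J.lower inf_le_right)⟩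
    rw [mem_inf_iff, not_or]
    rfl

section Separation

variable {L : Type*} [DistribLattice L]

theorem le_of_forall_latticeHom_prop {x y : L} (h : ∀ φ : LatticeHom L Prop, φ x → φ y) :
    x ≤ y := by
  by_contra hxy
  have hdisj : Disjoint (Order.PFilter.principal x : Set L) (Order.Ideal.principal y : Set L) :=
    Set.disjoint_left.2 fun _ hxz hzy =>
      hxy ((Order.PFilter.mem_principal.1 hxz).trans (Order.Ideal.mem_principal.1 hzy))
  obtain ⟨J, hJ, hyJ, hxJ⟩ := DistribLattice.prime_ideal_of_disjoint_filter_ideal hdisj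
  exact h (primeIdealHom J hJ) (Set.disjoint_left.1 hxJ (Order.PFilter.mem_principal.2 le_rfl))
    (Order.Ideal.principal_le_iff.1 hyJ)

theorem eq_of_forall_latticeHom_prop {x y : L} (h : ∀ φ : LatticeHom L Prop, φ x ↔ φ y) :
    x = y :=
  le_antisymm (le_of_forall_latticeHom_prop fun φ => (h φ).1)
    (le_of_forall_latticeHom_prop fun φ => (h φ).2)

end Separation

theorem exists_forall_le_of_isChain_range {κ α : Type*} [Finite κ] [Preorder α] {S : κ → α}
    (hS : IsChain (· ≤ ·) (Set.range S)) {t : Set κ} (ht : t.Nonempty) :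
    ∃ k ∈ t, ∀ l ∈ t, S k ≤ S l := by
  obtain ⟨k, hk, hmin⟩ := t.toFinite.exists_minimalFor S t ht
  exact ⟨k, hk, fun l hl => (hS.total ⟨k, rfl⟩ ⟨l, rfl⟩).elim id (hmin hl)⟩

theorem fold_sup_prop_iff {ι : Type*} {s : Finset ι} {c : Prop} {g : ι → Prop} :
    s.fold (fun u v : Prop => u ⊔ v) c g ↔ c ∨ ∃ i ∈ s, g i :=
  Finset.fold_op_rel_iff_or (r := fun _ p => p) (c := True) Iff.rfl

theorem inf'_prop_iff {ι : Type*} {s : Finset ι} {hs : s.Nonempty} {g : ι → Prop} :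
    s.inf' hs g ↔ ∀ i ∈ s, g i := by
  simpa only [le_Prop_eq, true_imp_iff] using Finset.le_inf'_iff hs g (a := True)

section ChainPolynomial

variable {ι κ L L' : Type*} [Fintype ι] [Fintype κ] [Lattice L] [Lattice L']

/-- The lattice polynomial `a₀ ∨ ⋁ i, (a i ∧ x i) ∨ ⋁ l, (b l ∧ ⋀ i ∈ S l, x i)` occurring in
`HasChainForm`, over arbitrary finite index types. That the sets `S l` form a chain is left to the
lemmas. The joins are folds, as `L` need not have a least element. -/
def chainPolynomial (S : κ → Finset ι) (hne : ∀ l, (S l).Nonempty) (a₀ : L) (a : ι → L) (b : κ → L)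
    (x : ι → L) : L :=
  Finset.univ.fold (fun u v : L => u ⊔ v)
    (Finset.univ.fold (fun u v : L => u ⊔ v) a₀ (fun i => a i ⊓ x i))
    (fun l => b l ⊓ (S l).inf' (hne l) (fun i => x i))

variable {S : κ → Finset ι} {hne : ∀ l, (S l).Nonempty}

theorem map_chainPolynomial (φ : LatticeHom L L') (a₀ : L) (a : ι → L) (b : κ → L) (x : ι → L) :
    φ (chainPolynomial S hne a₀ a b x) =
      chainPolynomial S hne (φ a₀) (φ ∘ a) (φ ∘ b) (φ ∘ x) := by
  simp only [chainPolynomial, ← Finset.fold_hom (op' := fun u v : L' => u ⊔ v) (map_sup φ),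
    map_inf, map_finset_inf', Function.comp_def]

theorem map_chainPolynomial_chainPolynomial (φ : LatticeHom L L') (a₀ : L) (a : ι → L) (b : κ → L)
    (M : ι → ι → L) :
    φ (chainPolynomial S hne a₀ a b fun i => chainPolynomial S hne a₀ a b (M i)) =
      chainPolynomial S hne (φ a₀) (φ ∘ a) (φ ∘ b) fun i =>
        chainPolynomial S hne (φ a₀) (φ ∘ a) (φ ∘ b) (φ ∘ M i) := by
  simp only [map_chainPolynomial, Function.comp_def]

variable {a₀ : Prop} {a : ι → Prop} {b : κ → Prop}

theorem chainPolynomial_prop_iff (x : ι → Prop) :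
    chainPolynomial S hne a₀ a b x ↔
      (a₀ ∨ ∃ i, a i ∧ x i) ∨ ∃ l, b l ∧ ∀ i ∈ S l, x i := by
  simp only [chainPolynomial, fold_sup_prop_iff, inf_Prop_eq, inf'_prop_iff,
    Finset.mem_univ, true_and]

theorem chainPolynomial_prop_iff_exists (h₀ : ¬ a₀) (ha : ∀ l, ∃ j ∈ S l, a j) (x : ι → Prop) :
    chainPolynomial S hne a₀ a b x ↔ ∃ i, a i ∧ x i := by
  rw [chainPolynomial_prop_iff, or_iff_right h₀, or_iff_left_iff_imp]
  rintro ⟨l, -, hx⟩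
  obtain ⟨j, hj, haj⟩ := ha l
  exact ⟨j, haj, hx j hj⟩

theorem chainPolynomial_prop_iff_forall_of_least (h₀ : ¬ a₀) (ha : ∀ i, ¬ a i) {k : κ} (hk : b k)
    (hmin : ∀ l, b l → S k ⊆ S l) (x : ι → Prop) :
    chainPolynomial S hne a₀ a b x ↔ ∀ i ∈ S k, x i := by
  simp only [chainPolynomial_prop_iff, h₀, ha, false_and, exists_false, false_or]
  exact ⟨fun ⟨l, hl, hx⟩ i hi => hx i (hmin l hl hi), fun hx => ⟨k, hk, hx⟩⟩

theorem chainPolynomial_prop_eq_exists_or_eq_forall (hS : IsChain (· ≤ ·) (Set.range S))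
    (ha : ∀ i l, ∃ j ∈ S l, a i → a j) :
    (∃ s : Set ι, ∀ x, chainPolynomial S hne a₀ a b x ↔ ∃ i ∈ s, x i) ∨
      ∃ s : Set ι, ∀ x, chainPolynomial S hne a₀ a b x ↔ ∀ i ∈ s, x i := by
  by_cases h₀ : a₀
  · exact .inr ⟨∅, fun x => by simp [chainPolynomial_prop_iff, h₀]⟩
  by_cases hex : ∃ i, a i
  · obtain ⟨i, hi⟩ := hex
    have ha' (l : κ) : ∃ j ∈ S l, a j := (ha i l).imp fun _ hj => ⟨hj.1, hj.2 hi⟩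
    exact .inl ⟨{i | a i}, chainPolynomial_prop_iff_exists h₀ ha'⟩
  push Not at hex
  by_cases hb : ∃ l, b l
  · obtain ⟨k, hk, hmin⟩ := exists_forall_le_of_isChain_range hS (t := {l | b l}) hb
    exact .inr ⟨S k, chainPolynomial_prop_iff_forall_of_least h₀ hex hk hmin⟩
  · push Not at hb
    exact .inl ⟨∅, fun x => by simp [chainPolynomial_prop_iff, h₀, hex, hb]⟩

theorem chainPolynomial_prop_comm (hS : IsChain (· ≤ ·) (Set.range S))
    (ha : ∀ i l, ∃ j ∈ S l, a i → a j) (M : ι → ι → Prop) :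
    chainPolynomial S hne a₀ a b (fun i => chainPolynomial S hne a₀ a b (M i)) ↔
      chainPolynomial S hne a₀ a b (fun j => chainPolynomial S hne a₀ a b fun i => M i j) := by
  obtain ⟨s, hs⟩ | ⟨s, hs⟩ := chainPolynomial_prop_eq_exists_or_eq_forall
    (hne := hne) (a₀ := a₀) (b := b) hS ha
  · simp only [hs]
    exact ⟨fun ⟨i, hi, j, hj, hM⟩ => ⟨j, hj, i, hi, hM⟩,
      fun ⟨j, hj, i, hi, hM⟩ => ⟨i, hi, j, hj, hM⟩⟩
  · simp only [hs]
    exact forall₂_comm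

end ChainPolynomial

theorem selfCommuting_of_chainForm_general {ι κ L : Type*} [Fintype ι] [Fintype κ]
    [DistribLattice L] {S : κ → Finset ι} {hne : ∀ l, (S l).Nonempty} {a₀ : L} {a : ι → L}
    {b : κ → L} (hS : IsChain (· ≤ ·) (Set.range S)) (ha : ∀ i l, ∃ j ∈ S l, a i ≤ a j)
    (M : ι → ι → L) :
    chainPolynomial S hne a₀ a b (fun i => chainPolynomial S hne a₀ a b (M i)) =
      chainPolynomial S hne a₀ a b (fun j => chainPolynomial S hne a₀ a b fun i => M i j) := by
  refine eq_of_forall_latticeHom_prop fun φ => ?_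
  have hφa (i : ι) (l : κ) : ∃ j ∈ S l, φ (a i) → φ (a j) :=
    (ha i l).imp fun _ hj => ⟨hj.1, OrderHomClass.mono φ hj.2⟩
  simp only [map_chainPolynomial_chainPolynomial]
  exact chainPolynomial_prop_comm hS hφa fun i j => φ (M i j)

/-- Over a distributive lattice, every function in chain form is self-commuting. -/
theorem selfCommuting_of_chainForm {L : Type*} [DistribLattice L] {n : ℕ}
    (f : (Fin n → L) → L) (hf : HasChainForm f) :
    SelfCommuting f := by
  obtain ⟨r, hr, S, a₀, a, b, hne, hS, -, -, -, -, -, hdom, hf⟩ := hf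
  have hmono : Monotone S := hS
  have ha (i : Fin n) (l : Fin r) : ∃ j ∈ S l, a i ≤ a j := by
    by_cases hi : i ∈ S ⟨0, hr⟩
    · exact ⟨i, hS _ l (Nat.zero_le _) hi, le_rfl⟩
    · obtain ⟨j, hj, hij⟩ := hdom i hi
      exact ⟨j, hS _ l (Nat.zero_le _) hj, hij⟩
  obtain rfl : f = chainPolynomial S hne a₀ a b := funext hf
  exact selfCommuting_of_chainForm_general hmono.isChain_range ha
end

section
/- Let L be a bounded chain and let f : L^3 → L be the ternary lattice polynomial function f(x_1, x_2, x_3) = a_∅ ∨ (a_1 ∧ x_1) ∨ (a_2 ∧ x_2) ∨ (a_3 ∧ x_3) ∨ (a_{12} ∧ x_1 ∧ x_2) ∨ (a_{13} ∧ x_1 ∧ x_3) ∨ (a_{23} ∧ x_2 ∧ x_3) ∨ (a_{123} ∧ x_1 ∧ x_2 ∧ x_3), where a_I ≤ a_J whenever I ⊆ J. If f is self-commuting, then for every choice of distinct indices i, j, k with {i, j, k} = {1, 2, 3}, one has a_{ij} ∧ a_{jk} ≤ a_i ∨ a_j ≤ a_{ij}. -/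
/-!
Let `f` and `g` be commuting lattice polynomials with coefficients `α` and `β`. Take rows `S` and,
for each `r ∈ S`, a set of columns `I r`; let `M` be the `{⊥, ⊤}`-valued matrix whose row `r ∈ S` is
the indicator of `I r` and whose other rows are `⊥`. Evaluating `g` on rows first gives at
least `α S ⊓ ⨅ r ∈ S, β (I r)`. A column outside `K = ⋂ r ∈ S, I r` misses some row of `S`, so
evaluating `f` on columns first, the terms of `g` supported in `K` are bounded by their
coefficients, and every other term is bounded by the value of a column missing a row of `S`.
The rows `{i, j}` and `{j, k}`, placed at positions `i` and `j`, give the ternary inequalities.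
-/

section LatticePolynomial

variable {ι L : Type*} [Fintype ι] [Lattice L] [BoundedOrder L]

/-- The lattice polynomial function with coefficients `α`, in disjunctive normal form
`⋁ S, α S ∧ ⋀ i ∈ S, x i`. -/
def latticePolynomial (α : Finset ι → L) (x : ι → L) : L :=
  Finset.univ.sup fun S => α S ⊓ S.inf x

lemma inf_le_latticePolynomial (α : Finset ι → L) (x : ι → L) (S : Finset ι) :
    α S ⊓ S.inf x ≤ latticePolynomial α x :=
  Finset.le_sup (f := fun S => α S ⊓ S.inf x) (Finset.mem_univ S)

variable [DecidableEq ι]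

lemma latticePolynomial_le_powerset_sup_sup_compl (α : Finset ι → L) (x : ι → L) (K : Finset ι) :
    latticePolynomial α x ≤ K.powerset.sup α ⊔ Kᶜ.sup x := by
  refine Finset.sup_le fun S _ => ?_
  by_cases hSK : S ⊆ K
  · exact le_sup_of_le_left (inf_le_left.trans (Finset.le_sup (Finset.mem_powerset.2 hSK)))
  · obtain ⟨c, hcS, hcK⟩ := Finset.not_subset.1 hSK
    exact le_sup_of_le_right (inf_le_right.trans
      ((Finset.inf_le hcS).trans (Finset.le_sup (Finset.mem_compl.2 hcK))))

lemma latticePolynomial_piecewise_top_bot (α : Finset ι → L) (T : Finset ι) :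
    latticePolynomial α (T.piecewise ⊤ ⊥) = T.powerset.sup α := by
  apply le_antisymm
  · have sup_compl_eq_bot : Tᶜ.sup (T.piecewise ⊤ ⊥ : ι → L) = ⊥ :=
      Finset.sup_eq_bot_iff _ _ |>.2 fun c hc =>
        T.piecewise_eq_of_notMem _ _ (Finset.mem_compl.1 hc)
    simpa only [sup_compl_eq_bot, sup_bot_eq] using
      latticePolynomial_le_powerset_sup_sup_compl α (T.piecewise ⊤ ⊥) T
  · refine Finset.sup_le fun S hS => ?_
    have inf_eq_top : S.inf (T.piecewise ⊤ ⊥ : ι → L) = ⊤ :=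
      Finset.inf_eq_top_iff _ _ |>.2 fun c hc =>
        T.piecewise_eq_of_mem _ _ (Finset.mem_powerset.1 hS hc)
    simpa only [inf_eq_top, inf_top_eq] using inf_le_latticePolynomial α (T.piecewise ⊤ ⊥) S

end LatticePolynomial

section Commutation

variable {L : Type*} [Lattice L] [BoundedOrder L] {n m : ℕ}

theorem Commutes.coeff_inf_le {α : Finset (Fin n) → L} {β : Finset (Fin m) → L}
    (h : Commutes (latticePolynomial α) (latticePolynomial β))
    (S : Finset (Fin n)) (I : Fin n → Finset (Fin m)) :
    α S ⊓ S.inf (fun r => β (I r)) ≤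
      (S.inf I).powerset.sup β ⊔ S.sup fun r => (S.erase r).powerset.sup α := by
  let M (r : Fin n) (c : Fin m) : L := ({s ∈ S | c ∈ I s}.piecewise ⊤ ⊥ : Fin n → L) r
  have row_ge (r) (hr : r ∈ S) : β (I r) ≤ latticePolynomial β (M r) := by
    have row_eq : M r = (I r).piecewise ⊤ ⊥ := by
      ext c
      simp [M, Finset.piecewise, hr]
    rw [row_eq, latticePolynomial_piecewise_top_bot]
    exact Finset.le_sup (Finset.mem_powerset_self _)
  have col_le (c) (hc : c ∈ (S.inf I)ᶜ) : latticePolynomial α (fun r => M r c) ≤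
      S.sup fun r => (S.erase r).powerset.sup α := by
    obtain ⟨s, hs, hcs⟩ : ∃ s ∈ S, c ∉ I s := by
      simpa only [Finset.mem_compl, Finset.mem_inf, not_forall, exists_prop] using hc
    have support_subset : {r ∈ S | c ∈ I r} ⊆ S.erase s := by grind
    exact (latticePolynomial_piecewise_top_bot α _).trans_le <|
      (Finset.sup_mono (Finset.powerset_mono.2 support_subset)).trans <|
        Finset.le_sup (f := fun r => (S.erase r).powerset.sup α) hs
  calc α S ⊓ S.inf (fun r => β (I r))
      ≤ α S ⊓ S.inf (fun r => latticePolynomial β (M r)) :=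
        inf_le_inf_left _ (Finset.inf_mono_fun row_ge)
    _ ≤ latticePolynomial α (fun r => latticePolynomial β (M r)) :=
        inf_le_latticePolynomial α _ S
    _ = latticePolynomial β (fun c => latticePolynomial α fun r => M r c) := h M
    _ ≤ (S.inf I).powerset.sup β ⊔ (S.inf I)ᶜ.sup (fun c => latticePolynomial α fun r => M r c) :=
        latticePolynomial_le_powerset_sup_sup_compl β _ _
    _ ≤ _ := sup_le_sup_left (Finset.sup_le col_le) _

theorem SelfCommuting.coeff_pair_inf_coeff_pair_le {α : Finset (Fin n) → L}
    (hα : ∀ i, α ∅ ≤ α {i}) (h : SelfCommuting (latticePolynomial α))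
    {i j k : Fin n} (hik : i ≠ k) :
    α {i, j} ⊓ α {j, k} ≤ α {i} ⊔ α {j} := by
  let I (r : Fin n) : Finset (Fin n) := if r = i then {i, j} else {j, k}
  have sup_le_of_subset {T : Finset (Fin n)} {s : Fin n} (hT : T ⊆ {s}) :
      T.powerset.sup α ≤ α {s} := by
    refine Finset.sup_le fun U hU => ?_
    rcases Finset.subset_singleton_iff.1 ((Finset.mem_powerset.1 hU).trans hT) with rfl | rfl
    exacts [hα s, le_rfl]
  have inter_subset : ({i, j} : Finset (Fin n)).inf I ⊆ {j} := by
    intro c hc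
    rw [Finset.mem_inf] at hc
    have mem_row_i : c ∈ I i := hc i (Finset.mem_insert_self i {j})
    have mem_row_j : c ∈ I j := hc j (Finset.mem_insert_of_mem (Finset.mem_singleton_self j))
    grind
  calc α {i, j} ⊓ α {j, k}
      ≤ α {i, j} ⊓ ({i, j} : Finset (Fin n)).inf (fun r => α (I r)) := by
        refine le_inf inf_le_left (Finset.le_inf fun r _ => ?_)
        by_cases hr : r = i
        · simp only [I, if_pos hr, inf_le_left]
        · simp only [I, if_neg hr, inf_le_right]
    _ ≤ _ := Commutes.coeff_inf_le h {i, j} I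
    _ ≤ α {i} ⊔ α {j} := by
        refine sup_le (le_sup_of_le_right (sup_le_of_subset inter_subset))
          (Finset.sup_le fun r hr => ?_)
        rcases Finset.mem_insert.1 hr with rfl | hr
        · exact le_sup_of_le_right (sup_le_of_subset (by grind))
        · exact le_sup_of_le_left (sup_le_of_subset (by grind))

end Commutation

section Ternary

variable {L : Type*}

/-- The coefficient family `S ↦ a_S` of a ternary lattice polynomial. Variables are numbered from
`0` in `Fin 3`, so that for instance `a₁₂` is the coefficient of `{0, 1}`. -/
def ternaryCoeff (a₀ a₁ a₂ a₃ a₁₂ a₁₃ a₂₃ a₁₂₃ : L) (S : Finset (Fin 3)) : L :=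
  if 0 ∈ S then
    if 1 ∈ S then if 2 ∈ S then a₁₂₃ else a₁₂
    else if 2 ∈ S then a₁₃ else a₁
  else
    if 1 ∈ S then if 2 ∈ S then a₂₃ else a₂
    else if 2 ∈ S then a₃ else a₀

variable [Lattice L] [BoundedOrder L]

lemma latticePolynomial_fin_three (α : Finset (Fin 3) → L) (x : Fin 3 → L) :
    latticePolynomial α x =
      α ∅ ⊔ (α {0} ⊓ x 0) ⊔ (α {1} ⊓ x 1) ⊔ (α {2} ⊓ x 2)
        ⊔ (α {0, 1} ⊓ x 0 ⊓ x 1) ⊔ (α {0, 2} ⊓ x 0 ⊓ x 2) ⊔ (α {1, 2} ⊓ x 1 ⊓ x 2)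
        ⊔ (α {0, 1, 2} ⊓ x 0 ⊓ x 1 ⊓ x 2) := by
  have univ_eq : (Finset.univ : Finset (Finset (Fin 3))) =
      {∅, {0}, {1}, {2}, {0, 1}, {0, 2}, {1, 2}, {0, 1, 2}} := by decide
  simp only [latticePolynomial, univ_eq, Finset.sup_insert, Finset.sup_singleton,
    Finset.inf_insert, Finset.inf_singleton, Finset.inf_empty, inf_top_eq, inf_assoc, sup_assoc]

theorem ternary_selfCommuting_coeff_ineq_general
    (a₀ a₁ a₂ a₃ a₁₂ a₁₃ a₂₃ a₁₂₃ : L)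
    (h₀₁ : a₀ ≤ a₁) (h₀₂ : a₀ ≤ a₂) (h₀₃ : a₀ ≤ a₃)
    (h₁ : a₁ ≤ a₁₂) (h₁' : a₁ ≤ a₁₃)
    (h₂ : a₂ ≤ a₁₂) (h₂' : a₂ ≤ a₂₃)
    (h₃ : a₃ ≤ a₁₃) (h₃' : a₃ ≤ a₂₃)
    (f : (Fin 3 → L) → L)
    (hf : ∀ x : Fin 3 → L,
      f x = a₀ ⊔ (a₁ ⊓ x 0) ⊔ (a₂ ⊓ x 1) ⊔ (a₃ ⊓ x 2)
        ⊔ (a₁₂ ⊓ x 0 ⊓ x 1) ⊔ (a₁₃ ⊓ x 0 ⊓ x 2) ⊔ (a₂₃ ⊓ x 1 ⊓ x 2)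
        ⊔ (a₁₂₃ ⊓ x 0 ⊓ x 1 ⊓ x 2))
    (hsc : SelfCommuting f) :
    (a₁₂ ⊓ a₂₃ ≤ a₁ ⊔ a₂ ∧ a₁ ⊔ a₂ ≤ a₁₂) ∧
    (a₁₃ ⊓ a₂₃ ≤ a₁ ⊔ a₃ ∧ a₁ ⊔ a₃ ≤ a₁₃) ∧
    (a₁₂ ⊓ a₁₃ ≤ a₂ ⊔ a₁ ∧ a₂ ⊔ a₁ ≤ a₁₂) ∧
    (a₂₃ ⊓ a₁₃ ≤ a₂ ⊔ a₃ ∧ a₂ ⊔ a₃ ≤ a₂₃) ∧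
    (a₁₃ ⊓ a₁₂ ≤ a₃ ⊔ a₁ ∧ a₃ ⊔ a₁ ≤ a₁₃) ∧
    (a₂₃ ⊓ a₁₂ ≤ a₃ ⊔ a₂ ∧ a₃ ⊔ a₂ ≤ a₂₃) := by
  let α := ternaryCoeff a₀ a₁ a₂ a₃ a₁₂ a₁₃ a₂₃ a₁₂₃
  have f_eq : f = latticePolynomial α :=
    funext fun x => (hf x).trans (latticePolynomial_fin_three α x).symm
  have coeff_empty_le : ∀ i, α ∅ ≤ α {i} := Fin.forall_fin_succ.2
    ⟨h₀₁, Fin.forall_fin_two.2 ⟨h₀₂, h₀₃⟩⟩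
  have pair_le {i j k : Fin 3} (hik : i ≠ k) : α {i, j} ⊓ α {j, k} ≤ α {i} ⊔ α {j} :=
    (f_eq ▸ hsc).coeff_pair_inf_coeff_pair_le coeff_empty_le hik
  exact ⟨⟨pair_le (i := 0) (j := 1) (k := 2) (by decide), sup_le h₁ h₂⟩,
    ⟨pair_le (i := 0) (j := 2) (k := 1) (by decide), sup_le h₁' h₃⟩,
    ⟨pair_le (i := 1) (j := 0) (k := 2) (by decide), sup_le h₂ h₁⟩,
    ⟨pair_le (i := 1) (j := 2) (k := 0) (by decide), sup_le h₂' h₃'⟩,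
    ⟨pair_le (i := 2) (j := 0) (k := 1) (by decide), sup_le h₃ h₁'⟩,
    ⟨pair_le (i := 2) (j := 1) (k := 0) (by decide), sup_le h₃' h₂'⟩⟩

end Ternary

/-- Necessary inequalities for a ternary lattice polynomial on a bounded chain
to be self-commuting: for all distinct `i, j, k` with `{i,j,k} = {1,2,3}`,
`a_{ij} ∧ a_{jk} ≤ a_i ∨ a_j ≤ a_{ij}`. The six choices of `(i,j,k)` are
spelled out explicitly. -/
theorem ternary_selfCommuting_coeff_ineq {L : Type*} [LinearOrder L] [BoundedOrder L]
    (a₀ a₁ a₂ a₃ a₁₂ a₁₃ a₂₃ a₁₂₃ : L)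
    -- `a_I ≤ a_J` whenever `I ⊆ J`
    (h₀₁ : a₀ ≤ a₁) (h₀₂ : a₀ ≤ a₂) (h₀₃ : a₀ ≤ a₃)
    (h₁ : a₁ ≤ a₁₂) (h₁' : a₁ ≤ a₁₃)
    (h₂ : a₂ ≤ a₁₂) (h₂' : a₂ ≤ a₂₃)
    (h₃ : a₃ ≤ a₁₃) (h₃' : a₃ ≤ a₂₃)
    (h₁₂ : a₁₂ ≤ a₁₂₃) (h₁₃ : a₁₃ ≤ a₁₂₃) (h₂₃ : a₂₃ ≤ a₁₂₃)
    (f : (Fin 3 → L) → L)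
    (hf : ∀ x : Fin 3 → L,
      f x = a₀ ⊔ (a₁ ⊓ x 0) ⊔ (a₂ ⊓ x 1) ⊔ (a₃ ⊓ x 2)
        ⊔ (a₁₂ ⊓ x 0 ⊓ x 1) ⊔ (a₁₃ ⊓ x 0 ⊓ x 2) ⊔ (a₂₃ ⊓ x 1 ⊓ x 2)
        ⊔ (a₁₂₃ ⊓ x 0 ⊓ x 1 ⊓ x 2))
    (hsc : SelfCommuting f) :
    (a₁₂ ⊓ a₂₃ ≤ a₁ ⊔ a₂ ∧ a₁ ⊔ a₂ ≤ a₁₂) ∧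
    (a₁₃ ⊓ a₂₃ ≤ a₁ ⊔ a₃ ∧ a₁ ⊔ a₃ ≤ a₁₃) ∧
    (a₁₂ ⊓ a₁₃ ≤ a₂ ⊔ a₁ ∧ a₂ ⊔ a₁ ≤ a₁₂) ∧
    (a₂₃ ⊓ a₁₃ ≤ a₂ ⊔ a₃ ∧ a₂ ⊔ a₃ ≤ a₂₃) ∧
    (a₁₃ ⊓ a₁₂ ≤ a₃ ⊔ a₁ ∧ a₃ ⊔ a₁ ≤ a₁₃) ∧
    (a₂₃ ⊓ a₁₂ ≤ a₃ ⊔ a₂ ∧ a₃ ⊔ a₂ ≤ a₂₃) := by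
  exact ternary_selfCommuting_coeff_ineq_general a₀ a₁ a₂ a₃ a₁₂ a₁₃ a₂₃ a₁₂₃
    h₀₁ h₀₂ h₀₃ h₁ h₁' h₂ h₂' h₃ h₃' f hf hsc
end
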